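/- Let m ≥ 1 and let N₁, …, N_m be positive integers with Q = N₁·N₂···N_m. Let f be a complex-valued function of multi-indices (x₁,…,x_m) with 0 ≤ x_i < N_i. Define the flattened array f̃(z) = f(x₁,…,x_m) for z = Σ_{i=1}^{m} x_i · (N₁···N_{i−1}) (empty product = 1), its 1-D DFT F₁(w) = Σ_{z=0}^{Q−1} exp(−2πi·z·w/Q)·f̃(z), and the generalized m-dimensional DFT at real frequencies F_m(a₁,…,a_m) = Σ_{x_m=0}^{N_m−1} ⋯ Σ_{x₁=0}^{N₁−1} exp(−2πi·Σ_{i=1}^{m} x_i·a_i/N_i)·f(x₁,…,x_m) for real a₁,…,a_m. Then for all integers u₁,…,u_m with 0 ≤ u_k < N_k, setting w = Σ_{k=1}^{m} u_k·(N_{k+1}···N_m) (empty product = 1), α_m = 0 and α_i = Σ_{k=i+1}^{m} u_k/(N_{i+1}···N_k) for i < m, one has F₁(w) = F_m(u₁ + α₁, u₂ + α₂, …, u_{m−1} + α_{m−1}, u_m). -/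

import Mathlib

open Finset

/-- The total number of samples `Q = N₁·N₂···N_m`. -/
def mQ (m : ℕ) (N : Fin m → ℕ) : ℕ := ∏ i, N i

/-- The digit-order-reversed mixed-radix flattening
`w = Σ_k u_k · (N_{k+1}···N_m)` (empty product = 1). -/
def mrev (m : ℕ) (N : Fin m → ℕ) (u : Fin m → ℕ) : ℕ :=
  ∑ k, u k * ∏ h ∈ Finset.univ.filter (fun h => k < h), N h

/-- Mixed-radix digit extraction: the multi-index `(x₁,…,x_m)` of a flattened
index `z` (so that `z = Σᵢ xᵢ · (N₁···N_{i−1})` whenever `z < Q`). -/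
def munflatten (m : ℕ) (N : Fin m → ℕ) (z : ℕ) : Fin m → ℕ :=
  fun i => z / (∏ j ∈ Finset.univ.filter (fun j => j < i), N j) % N i

/-- The skew offsets `αᵢ = Σ_{k=i+1}^{m} u_k / (N_{i+1}·N_{i+2}···N_k)`
(so `α_m = 0`, the sum being empty). -/
noncomputable def malpha (m : ℕ) (N : Fin m → ℕ) (u : Fin m → ℕ) (i : Fin m) : ℝ :=
  ∑ k ∈ Finset.univ.filter (fun k => i < k),
    (u k : ℝ) / ∏ h ∈ Finset.univ.filter (fun h => i < h ∧ h ≤ k), (N h : ℝ)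

/-- One-dimensional DFT of a sequence `g` of `L` samples, evaluated at frequency `w`. -/
noncomputable def dft1 (L : ℕ) (g : ℕ → ℂ) (w : ℕ) : ℂ :=
  ∑ z ∈ Finset.range L,
    Complex.exp (-2 * Real.pi * Complex.I * (((z : ℝ) * w) / L : ℝ)) * g z

/-- Generalized `m`-dimensional DFT of the array `f` at real frequencies
`a = (a₁,…,a_m)`: the sum over all multi-indices `(x₁,…,x_m)` with `0 ≤ xᵢ < Nᵢ`. -/
noncomputable def mdft (m : ℕ) (N : Fin m → ℕ) (f : (Fin m → ℕ) → ℂ)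
    (a : Fin m → ℝ) : ℂ :=
  ∑ x ∈ Fintype.piFinset (fun i => Finset.range (N i)),
    Complex.exp (-2 * Real.pi * Complex.I * ((∑ i, (x i : ℝ) * a i / (N i : ℝ)) : ℝ)) * f x

/-!
Put `P i = ∏_{j < i} N j` and `S k = ∏_{k < h} N h`, so that `z = ∑ i, x i * P i` and
`w = ∑ k, u k * S k`. In the expansion of `z * w / Q` the coefficient of `x i * u k` is
`P i * S k / Q`. For `k < i` the two products together cover every index and overlap on `Ioo k i`,
so this coefficient is an integer, invisible to the exponential. For `i ≤ k` they miss exactly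
`Icc i k`, so it is the inverse of `∏_{i ≤ h ≤ k} N h`; the sum of `u k` times these is
`(u i + α i) / N i`, the diagonal giving `u i` and the rest the skew.
-/

section Products

variable {ι M : Type*} [Fintype ι] [LinearOrder ι] [LocallyFiniteOrder ι]
  [LocallyFiniteOrderBot ι] [LocallyFiniteOrderTop ι] [CommMonoid M]

lemma prod_Iio_mul_prod_Ioi_of_lt (N : ι → M) {i k : ι} (hki : k < i) :
    (∏ j ∈ Iio i, N j) * ∏ h ∈ Ioi k, N h = (∏ h, N h) * ∏ h ∈ Ioo k i, N h := by
  have hunion : Iio i ∪ Ioi k = univ := by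
    ext h
    simpa using (lt_or_ge h i).imp_right hki.trans_le
  have hinter : Iio i ∩ Ioi k = Ioo k i := by
    ext h
    simp [and_comm]
  rw [← prod_union_inter, hunion, hinter]

lemma prod_Iio_mul_prod_Icc_mul_prod_Ioi (N : ι → M) {i k : ι} (hik : i ≤ k) :
    (∏ j ∈ Iio i, N j) * (∏ h ∈ Icc i k, N h) * ∏ h ∈ Ioi k, N h = ∏ h, N h := by
  have hIic : Iio i ∪ Icc i k = Iic k := by
    ext h
    simp only [mem_union, mem_Iio, mem_Icc, mem_Iic]
    grind
  have huniv : Iic k ∪ Ioi k = univ := by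
    ext h
    simpa using le_or_gt h k
  rw [← prod_union (disjoint_left.2 (by simp +contextual)), hIic,
    ← prod_union (disjoint_left.2 (by simp +contextual)), huniv]

end Products

section MixedRadix

variable {m : ℕ} {N : Fin m → ℕ}

/-- The mixed-radix flattening `z = Σᵢ xᵢ · (N₁···N_{i−1})` of a multi-index, with `x₁` the
fastest-changing digit. It is defined for arbitrary digits, and inverse to `munflatten` on those
with `xᵢ < Nᵢ`. -/
def mflatten (m : ℕ) (N : Fin m → ℕ) (x : Fin m → ℕ) : ℕ :=
  ∑ i, x i * ∏ j ∈ Iio i, N j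

lemma prod_castLE_eq_prod_Iio {M : Type*} [CommMonoid M] (N : Fin m → M) (i : Fin m) :
    ∏ j : Fin i, N (Fin.castLE i.is_lt.le j) = ∏ j ∈ Iio i, N j := by
  refine prod_bij (fun j _ => Fin.castLE i.is_lt.le j) (fun j _ => ?_) (fun _ _ _ _ h => ?_)
    (fun j hj => ⟨⟨j, by simpa using hj⟩, mem_univ _, rfl⟩) (fun _ _ => rfl)
  · simpa using Fin.lt_def.2 j.is_lt
  · simpa using h

lemma coe_finPiFinEquiv (x : ∀ i, Fin (N i)) :
    (finPiFinEquiv x : ℕ) = mflatten m N (fun i => x i) := by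
  simp only [finPiFinEquiv_apply, prod_castLE_eq_prod_Iio, mflatten]

lemma coe_finPiFinEquiv_symm (z : Fin (∏ i, N i)) (i : Fin m) :
    (finPiFinEquiv.symm z i : ℕ) = munflatten m N z i := by
  change (z : ℕ) / (∏ j : Fin i, N (Fin.castLE i.is_lt.le j)) % N i = _
  rw [prod_castLE_eq_prod_Iio, munflatten, filter_gt_eq_Iio]

lemma mflatten_lt_mQ {x : Fin m → ℕ} (hx : ∀ i, x i < N i) : mflatten m N x < mQ m N := by
  have h := (finPiFinEquiv fun i => (⟨x i, hx i⟩ : Fin (N i))).is_lt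
  rwa [coe_finPiFinEquiv] at h

lemma munflatten_lt {z : ℕ} (hz : z < mQ m N) (i : Fin m) : munflatten m N z i < N i := by
  simpa only [coe_finPiFinEquiv_symm] using (finPiFinEquiv.symm ⟨z, hz⟩ i).is_lt

lemma munflatten_mflatten {x : Fin m → ℕ} (hx : ∀ i, x i < N i) :
    munflatten m N (mflatten m N x) = x := by
  funext i
  have h := congrArg (fun y => (y i : ℕ))
    (finPiFinEquiv.symm_apply_apply fun i => (⟨x i, hx i⟩ : Fin (N i)))
  simpa only [coe_finPiFinEquiv_symm, coe_finPiFinEquiv] using h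

lemma mflatten_munflatten {z : ℕ} (hz : z < mQ m N) : mflatten m N (munflatten m N z) = z := by
  have h := congrArg Fin.val (finPiFinEquiv.apply_symm_apply (⟨z, hz⟩ : Fin (∏ i, N i)))
  simpa only [coe_finPiFinEquiv, coe_finPiFinEquiv_symm] using h

lemma sum_range_mQ {M : Type*} [AddCommMonoid M] (g : ℕ → M) :
    ∑ z ∈ range (mQ m N), g z
      = ∑ x ∈ Fintype.piFinset (fun i => range (N i)), g (mflatten m N x) := by
  refine sum_nbij' (munflatten m N) (mflatten m N) ?_ ?_ ?_ ?_ ?_ <;>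
    simp +contextual [munflatten_lt, mflatten_lt_mQ, munflatten_mflatten, mflatten_munflatten]

lemma add_malpha_div_eq_sum_Ici (u : Fin m → ℕ) (i : Fin m) :
    ((u i : ℝ) + malpha m N u i) / N i = ∑ k ∈ Ici i, (u k : ℝ) / ∏ h ∈ Icc i k, (N h : ℝ) := by
  have hIoc (k : Fin m) : univ.filter (fun h => i < h ∧ h ≤ k) = Ioc i k := by
    ext h
    simp
  simp only [malpha, filter_lt_eq_Ioi, hIoc]
  rw [add_div, sum_div, ← add_sum_Ioi_eq_sum_Ici, Icc_self, prod_singleton]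
  refine congrArg _ (sum_congr rfl fun k hk => ?_)
  rw [← mul_prod_Ioc_eq_prod_Icc (mem_Ioi.1 hk).le, div_div, mul_comm]

lemma prod_Iio_mul_mrev_div_mQ (hN : ∀ i, 0 < N i) (u : Fin m → ℕ) (i : Fin m) :
    (∏ j ∈ Iio i, (N j : ℝ)) * mrev m N u / mQ m N
      = ((u i : ℝ) + malpha m N u i) / N i + (∑ k ∈ Iio i, u k * ∏ h ∈ Ioo k i, N h : ℕ) := by
  have hprod (s : Finset (Fin m)) : ∏ h ∈ s, (N h : ℝ) ≠ 0 :=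
    prod_ne_zero_iff.2 fun h _ => Nat.cast_ne_zero.2 (hN h).ne'
  have hge (k : Fin m) (hk : k ∈ Ici i) :
      (∏ j ∈ Iio i, (N j : ℝ)) * (u k * ∏ h ∈ Ioi k, (N h : ℝ)) / ∏ h, (N h : ℝ)
        = u k / ∏ h ∈ Icc i k, (N h : ℝ) := by
    rw [div_eq_div_iff (hprod _) (hprod _),
      ← prod_Iio_mul_prod_Icc_mul_prod_Ioi _ (mem_Ici.1 hk)]
    ring
  have hlt (k : Fin m) (hk : k ∈ Iio i) :
      (∏ j ∈ Iio i, (N j : ℝ)) * (u k * ∏ h ∈ Ioi k, (N h : ℝ)) / ∏ h, (N h : ℝ)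
        = u k * ∏ h ∈ Ioo k i, (N h : ℝ) := by
    rw [div_eq_iff (hprod _), mul_left_comm, prod_Iio_mul_prod_Ioi_of_lt _ (mem_Iio.1 hk)]
    ring
  simp only [mrev, mQ, filter_lt_eq_Ioi]
  push_cast
  rw [mul_sum, sum_div, ← sum_filter_add_sum_filter_not univ (i ≤ ·)]
  simp only [not_le, filter_le_eq_Ici, filter_gt_eq_Iio]
  rw [sum_congr rfl hge, sum_congr rfl hlt, add_malpha_div_eq_sum_Ici]

lemma exists_mflatten_mul_mrev_div_mQ_eq (hN : ∀ i, 0 < N i) (x u : Fin m → ℕ) :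
    ∃ n : ℕ, (mflatten m N x : ℝ) * mrev m N u / mQ m N
      = ∑ i, (x i : ℝ) * ((u i : ℝ) + malpha m N u i) / N i + n := by
  refine ⟨∑ i, x i * ∑ k ∈ Iio i, u k * ∏ h ∈ Ioo k i, N h, ?_⟩
  rw [mflatten, Nat.cast_sum, Nat.cast_sum, sum_mul, sum_div, ← sum_add_distrib]
  refine sum_congr rfl fun i _ => ?_
  rw [Nat.cast_mul, Nat.cast_mul, Nat.cast_prod, mul_assoc, mul_div_assoc,
    prod_Iio_mul_mrev_div_mQ hN, mul_add, mul_div_assoc]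

end MixedRadix

lemma exp_neg_two_pi_mul_I_mul_add_intCast (r : ℂ) (n : ℤ) :
    Complex.exp (-2 * Real.pi * Complex.I * (r + n))
      = Complex.exp (-2 * Real.pi * Complex.I * r) := by
  rw [← Complex.exp_periodic.int_mul n (-2 * Real.pi * Complex.I * (r + n))]
  congr 1
  ring

theorem one_dim_dft_eq_skewed_multi_dim_dft_general
    (m : ℕ) (N : Fin m → ℕ) (hN : ∀ i, 0 < N i) (f : (Fin m → ℕ) → ℂ) (u : Fin m → ℕ) :
    dft1 (mQ m N) (fun z => f (munflatten m N z)) (mrev m N u)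
      = mdft m N f (fun i => (u i : ℝ) + malpha m N u i) := by
  rw [dft1, mdft, sum_range_mQ]
  refine sum_congr rfl fun x hx => ?_
  have hdigits : ∀ i, x i < N i := by simpa using hx
  obtain ⟨n, hphase⟩ := exists_mflatten_mul_mrev_div_mQ_eq hN x u
  rw [munflatten_mflatten hdigits, hphase, Complex.ofReal_add, Complex.ofReal_natCast,
    ← Int.cast_natCast n, exp_neg_two_pi_mul_I_mul_add_intCast]

/-- Eq. (3.9): the single 1-D DFT of the flattened `m`-dimensional
array, evaluated at the digit-reversed frequency index `w`, equals the
`m`-dimensional DFT of `f` sampled on the skewed grid `(u₁+α₁, …, u_m+α_m)`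
(where `α_m = 0`). -/
theorem one_dim_dft_eq_skewed_multi_dim_dft
    (m : ℕ) (hm : 1 ≤ m) (N : Fin m → ℕ) (hN : ∀ i, 0 < N i)
    (f : (Fin m → ℕ) → ℂ) (u : Fin m → ℕ) (hu : ∀ k, u k < N k) :
    dft1 (mQ m N) (fun z => f (munflatten m N z)) (mrev m N u)
      = mdft m N f (fun i => (u i : ℝ) + malpha m N u i) :=
  one_dim_dft_eq_skewed_multi_dim_dft_general m N hN f u
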